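/- Let (λ_n)_{n∈ℕ} be a strictly increasing enumeration of all eigenvalues of the Neumann problem (γ₀ = γ₁ = 0) for the equation −y'' − λρy = 0 with weight ρ the distributional derivative of the Cantor-type self-similar function P with parameters κ, a, b, and let (μ_n)_{n∈ℕ} be a strictly increasing enumeration of all eigenvalues of the problem with constants γ₀ ≥ 0, γ₁ ≥ 0 for the same equation. Then the partial sums of the series Σ_{n=1}^∞ |ln μ_n − ln λ_n| are bounded: there exists C such that Σ_{n=1}^N |ln μ_n − ln λ_n| ≤ C for every N ≥ 1. -/

import Mathlib

open MeasureTheory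

/-- A continuous function `f : [0,1] → ℝ` is a *self-similar function of Cantor type*
with parameters `κ`, `a`, `b` if `f 0 = 0`, `f 1 = 1`, `f` is constant on each interval
`(α_{2k-1}, α_{2k})` for `k ∈ {1, …, κ-1}` (where `α_{2k} = k(a+b)`, `α_{2k+1} = α_{2k} + a`),
and for each `k ∈ {0, …, κ-1}` the function `x ↦ κ·f(α_{2k} + a·x)` differs from `f`
by an additive constant. -/
def CantorType (κ : ℕ) (a b : ℝ) (f : ℝ → ℝ) : Prop :=
  ContinuousOn f (Set.Icc 0 1) ∧ f 0 = 0 ∧ f 1 = 1 ∧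
  (∀ k : ℕ, 1 ≤ k → k ≤ κ - 1 →
    ∃ c : ℝ, ∀ x ∈ Set.Ioo (((k : ℝ) - 1) * (a + b) + a) ((k : ℝ) * (a + b)), f x = c) ∧
  (∀ k : ℕ, k ≤ κ - 1 → ∃ c : ℝ, ∀ x ∈ Set.Icc (0 : ℝ) 1,
    (κ : ℝ) * f ((k : ℝ) * (a + b) + a * x) = f x + c)

/-- `lam` is an eigenvalue of the boundary value problem
`-y'' - λ ρ y = 0`, `y⁽¹⁾(0) - γ₀ y(0) = 0`, `y⁽¹⁾(1) + γ₁ y(1) = 0`, where `ρ` is the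
distributional derivative of the function whose Lebesgue–Stieltjes measure is `μ`:
there are continuous `y, g : [0,1] → ℝ`, `y` not identically zero, with
`y(x) = y(0) + ∫₀ˣ g`, `g(x) = g(0) - λ ∫_{[0,x]} y dμ`, and
`g(0) - γ₀ y(0) = 0`, `g(1) + γ₁ y(1) = 0`. -/
def IsEigen (μ : Measure ℝ) (γ₀ γ₁ lam : ℝ) : Prop :=
  ∃ y g : ℝ → ℝ, ContinuousOn y (Set.Icc 0 1) ∧ ContinuousOn g (Set.Icc 0 1) ∧
    (∃ x ∈ Set.Icc (0 : ℝ) 1, y x ≠ 0) ∧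
    (∀ x ∈ Set.Icc (0 : ℝ) 1, y x = y 0 + ∫ t in (0 : ℝ)..x, g t) ∧
    (∀ x ∈ Set.Icc (0 : ℝ) 1, g x = g 0 - lam * ∫ t in Set.Icc (0 : ℝ) x, y t ∂μ) ∧
    g 0 - γ₀ * y 0 = 0 ∧ g 1 + γ₁ * y 1 = 0

/-!
A finite-energy function `y` on `[0, 1]` is encoded by the pair `(y(0), y')`, an element of
`L²(δ₀ + dx)`; evaluation at `x` is then the inner product with the indicator function of `[0, x]`.
The eigenvalue problem becomes that of the form `∫ (y')² + γ₀ y(0)² + γ₁ y(1)²` relative to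
`‖y‖²` in `L²(μ)`, and the embedding into `L²(μ)` is compact, so there is an eigenbasis; eigenvalues
are simple because an eigenfunction is determined by `y(0)`.

The boundary terms are a nonnegative perturbation of rank two. Comparing test spaces as in the
Courant–Fischer principle gives `λ_n ≤ μ_n`. Testing the perturbed form on the first `N` Neumann
eigenfunctions `u_n` (Ky Fan) gives `∑_{n < N} (μ_n - λ_n) ≤ ∑_{n < N} (γ₀ u_n(0)² + γ₁ u_n(1)²)`
for every `N`, and Abel summation inserts the decreasing weights `1 / (λ_n + 1)` on both sides. With
these weights the right-hand side is bounded by Bessel's inequality, because the functions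
`u_n / √(λ_n + 1)` are orthonormal for the Neumann form plus the `L²(μ)` form, and evaluation at
a point is bounded in that norm. Finally `log x ≤ x - 1` bounds `log μ_n - log λ_n` by a multiple of
`(μ_n - λ_n) / (λ_n + 1)` as soon as `n ≥ 1`.
-/

section SeriesEstimates

theorem sum_range_mul_nonneg_of_antitone {w x : ℕ → ℝ} (hw : Antitone w) (hw₀ : ∀ n, 0 ≤ w n)
    (hx : ∀ n, 0 ≤ ∑ i ∈ Finset.range n, x i) (N : ℕ) :
    0 ≤ ∑ i ∈ Finset.range N, w i * x i := by
  suffices h : ∀ n, w n * ∑ i ∈ Finset.range n, x i ≤ ∑ i ∈ Finset.range n, w i * x i from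
    (mul_nonneg (hw₀ N) (hx N)).trans (h N)
  intro n
  induction n with
  | zero => simp
  | succ n ih =>
    calc w (n + 1) * ∑ i ∈ Finset.range (n + 1), x i
        ≤ w n * ∑ i ∈ Finset.range (n + 1), x i :=
          mul_le_mul_of_nonneg_right (hw n.le_succ) (hx _)
      _ = w n * ∑ i ∈ Finset.range n, x i + w n * x n := by rw [Finset.sum_range_succ, mul_add]
      _ ≤ ∑ i ∈ Finset.range (n + 1), w i * x i := by
          rw [Finset.sum_range_succ]
          gcongr

theorem abs_log_sub_log_le {c x y : ℝ} (hc : 0 < c) (hcx : c ≤ x) (hxy : x ≤ y) :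
    |Real.log y - Real.log x| ≤ (1 + 1 / c) * ((y - x) / (x + 1)) := by
  have hx : 0 < x := hc.trans_le hcx
  have hy : 0 < y := hx.trans_le hxy
  calc |Real.log y - Real.log x|
      = Real.log (y / x) := by
        rw [abs_of_nonneg (sub_nonneg.2 (Real.log_le_log hx hxy)), Real.log_div hy.ne' hx.ne']
    _ ≤ y / x - 1 := Real.log_le_sub_one_of_pos (div_pos hy hx)
    _ = (1 + 1 / x) * ((y - x) / (x + 1)) := by field_simp
    _ ≤ (1 + 1 / c) * ((y - x) / (x + 1)) := by
        have := div_nonneg (sub_nonneg.2 hxy) (by positivity : 0 ≤ x + 1)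
        gcongr

theorem sum_Icc_abs_log_sub_log_le {l m : ℕ → ℝ} (hl : StrictMono l) (hl₀ : 0 ≤ l 0)
    (hlm : ∀ n, l n ≤ m n) {C : ℝ}
    (hC : ∀ N, ∑ n ∈ Finset.range N, (m n - l n) / (l n + 1) ≤ C) (N : ℕ) :
    ∑ n ∈ Finset.Icc 1 N, |Real.log (m n) - Real.log (l n)| ≤ (1 + 1 / l 1) * C := by
  have hl₁ : 0 < l 1 := hl₀.trans_lt (hl Nat.zero_lt_one)
  have hterm (n : ℕ) : 0 ≤ (m n - l n) / (l n + 1) :=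
    div_nonneg (sub_nonneg.2 (hlm n)) (by linarith [hl.monotone n.zero_le])
  have hsubset : Finset.Icc 1 N ⊆ Finset.range (N + 1) := fun n hn =>
    Finset.mem_range.2 (Nat.lt_succ_of_le (Finset.mem_Icc.1 hn).2)
  calc ∑ n ∈ Finset.Icc 1 N, |Real.log (m n) - Real.log (l n)|
      ≤ ∑ n ∈ Finset.Icc 1 N, (1 + 1 / l 1) * ((m n - l n) / (l n + 1)) :=
        Finset.sum_le_sum fun n hn =>
          abs_log_sub_log_le hl₁ (hl.monotone (Finset.mem_Icc.1 hn).1) (hlm n)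
    _ = (1 + 1 / l 1) * ∑ n ∈ Finset.Icc 1 N, (m n - l n) / (l n + 1) := by rw [Finset.mul_sum]
    _ ≤ (1 + 1 / l 1) * ∑ n ∈ Finset.range (N + 1), (m n - l n) / (l n + 1) := by
        gcongr
        exact fun n _ _ => hterm n
    _ ≤ (1 + 1 / l 1) * C := by
        gcongr
        exact hC (N + 1)

end SeriesEstimates

section Pencil

open scoped RealInnerProductSpace

variable {H L : Type*} [NormedAddCommGroup H] [InnerProductSpace ℝ H]
  [NormedAddCommGroup L] [InnerProductSpace ℝ L] {A : H →L[ℝ] H} {J : H →L[ℝ] L}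

/-- The eigenspace, for the eigenvalue `t`, of the pair of quadratic forms `⟪A y, y⟫` and
`‖J y‖ ^ 2`: the solutions of `A y = t • J† (J y)`, written in weak form. -/
def pencilEigenspace (A : H →L[ℝ] H) (J : H →L[ℝ] L) (t : ℝ) : Submodule ℝ H where
  carrier := {y | ∀ z, ⟪A y, z⟫ = t * ⟪J y, J z⟫}
  zero_mem' z := by simp
  add_mem' {x y} hx hy z := by simp only [map_add, inner_add_left, hx z, hy z, mul_add]
  smul_mem' r y hy z := by
    simp only [map_smul, real_inner_smul_left, hy z]
    ring

theorem mem_pencilEigenspace {t : ℝ} {y : H} :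
    y ∈ pencilEigenspace A J t ↔ ∀ z, ⟪A y, z⟫ = t * ⟪J y, J z⟫ :=
  Iff.rfl

theorem mem_pencilEigenspace_iff_eq_smul_adjoint [CompleteSpace H] [CompleteSpace L] {t : ℝ}
    {y : H} : y ∈ pencilEigenspace A J t ↔ A y = t • J.adjoint (J y) := by
  rw [mem_pencilEigenspace, ext_iff_inner_right ℝ]
  simp only [real_inner_smul_left, ContinuousLinearMap.adjoint_inner_left]

theorem inner_map_eq_zero_of_mem_pencilEigenspace (hA : (A : H →ₗ[ℝ] H).IsSymmetric) {s t : ℝ}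
    (hst : s ≠ t) {y z : H} (hy : y ∈ pencilEigenspace A J s) (hz : z ∈ pencilEigenspace A J t) :
    ⟪J y, J z⟫ = 0 := by
  have h : s * ⟪J y, J z⟫ = t * ⟪J y, J z⟫ :=
    calc s * ⟪J y, J z⟫ = ⟪A y, z⟫ := (hy z).symm
      _ = ⟪A z, y⟫ := (hA y z).trans (real_inner_comm _ _)
      _ = t * ⟪J y, J z⟫ := by rw [hz y, real_inner_comm]
  by_contra hne
  exact hst (mul_right_cancel₀ hne h)

/-- Eigenvectors `v i` of the pencil `(A, J)` for the eigenvalues `l i` whose images `J (v i)` form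
a Hilbert basis of `L`. -/
structure IsPencilEigenbasis {ι : Type*} (A : H →L[ℝ] H) (J : H →L[ℝ] L) (l : ι → ℝ) (v : ι → H) :
    Prop where
  mem : ∀ i, v i ∈ pencilEigenspace A J (l i)
  orthonormal : Orthonormal ℝ fun i => J (v i)
  orthogonal_span : (Submodule.span ℝ (Set.range fun i => J (v i)))ᗮ = ⊥

namespace IsPencilEigenbasis

section Bessel

variable {ι : Type*} {l : ι → ℝ} {v : ι → H}

theorem inner_map_sum (hv : IsPencilEigenbasis A J l v) (s : Finset ι) (d : ι → ℝ) (z : H) :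
    ⟪A (∑ i ∈ s, d i • v i), z⟫ = ∑ i ∈ s, d i * (l i * ⟪J (v i), J z⟫) := by
  simp only [map_sum, map_smul, sum_inner, real_inner_smul_left,
    fun i => mem_pencilEigenspace.1 (hv.mem i) z]

theorem inner_map_sum_right (hv : IsPencilEigenbasis A J l v) {s : Finset ι} (d : ι → ℝ) {i : ι}
    (hi : i ∈ s) : ⟪J (v i), J (∑ j ∈ s, d j • v j)⟫ = d i := by
  simp only [map_sum, map_smul]
  exact hv.orthonormal.inner_right_sum d hi

theorem inner_map_sum_self (hv : IsPencilEigenbasis A J l v) (s : Finset ι) (d : ι → ℝ) :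
    ⟪A (∑ i ∈ s, d i • v i), ∑ i ∈ s, d i • v i⟫ = ∑ i ∈ s, l i * d i ^ 2 := by
  rw [hv.inner_map_sum]
  refine Finset.sum_congr rfl fun i hi => ?_
  rw [hv.inner_map_sum_right d hi]
  ring

theorem norm_sq_map_sum (hv : IsPencilEigenbasis A J l v) (s : Finset ι) (d : ι → ℝ) :
    ‖J (∑ i ∈ s, d i • v i)‖ ^ 2 = ∑ i ∈ s, d i ^ 2 := by
  simp only [map_sum, map_smul, ← real_inner_self_eq_norm_sq]
  simpa only [sq, conj_trivial] using hv.orthonormal.inner_sum d d s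

theorem eigenvalue_eq (hv : IsPencilEigenbasis A J l v) (i : ι) : ⟪A (v i), v i⟫ = l i := by
  rw [hv.mem i, real_inner_self_eq_norm_sq, hv.orthonormal.1 i, one_pow, mul_one]

theorem eigenvalue_nonneg (hv : IsPencilEigenbasis A J l v) (hA : A.IsPositive) (i : ι) :
    0 ≤ l i :=
  hv.eigenvalue_eq i ▸ hA.inner_nonneg_left (v i)

theorem sum_mul_inner_sq_le (hv : IsPencilEigenbasis A J l v) (hA : A.IsPositive) (u : H)
    (s : Finset ι) : ∑ i ∈ s, l i * ⟪J (v i), J u⟫ ^ 2 ≤ ⟪A u, u⟫ := by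
  set w := ∑ i ∈ s, ⟪J (v i), J u⟫ • v i
  have hww : ⟪A w, w⟫ = ∑ i ∈ s, l i * ⟪J (v i), J u⟫ ^ 2 := hv.inner_map_sum_self s _
  have hwu : ⟪A w, u⟫ = ∑ i ∈ s, l i * ⟪J (v i), J u⟫ ^ 2 := by
    rw [hv.inner_map_sum]
    exact Finset.sum_congr rfl fun i _ => by ring
  have huw : ⟪A u, w⟫ = ⟪A w, u⟫ := by rw [hA.inner_left_eq_inner_right, real_inner_comm]
  have hpos := hA.inner_nonneg_left (u - w)
  rw [map_sub, inner_sub_left, inner_sub_right, inner_sub_right, huw, hww, hwu] at hpos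
  linarith

theorem mul_norm_sq_le [CompleteSpace L] (hv : IsPencilEigenbasis A J l v) (hA : A.IsPositive)
    {c : ℝ} {s : Finset ι} (hs : ∀ i ∉ s, c ≤ l i) (u : H) :
    c * ‖J u‖ ^ 2 ≤ ⟪A u, u⟫ + ∑ i ∈ s, (c - l i) * ⟪J (v i), J u⟫ ^ 2 := by
  classical
  have hparseval : HasSum (fun i => c * ⟪J (v i), J u⟫ ^ 2) (c * ‖J u‖ ^ 2) := by
    have h := (HilbertBasis.mkOfOrthogonalEqBot hv.orthonormal
      hv.orthogonal_span).hasSum_inner_mul_inner (J u) (J u)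
    simp only [HilbertBasis.coe_mkOfOrthogonalEqBot, real_inner_self_eq_norm_sq,
      real_inner_comm (J (v _)) (J u), ← sq] at h
    exact h.mul_left c
  refine le_of_tendsto hparseval ?_
  filter_upwards [Filter.eventually_ge_atTop s] with t hst
  have hsplit : ∑ i ∈ t, (c - l i) * ⟪J (v i), J u⟫ ^ 2 ≤
      ∑ i ∈ s, (c - l i) * ⟪J (v i), J u⟫ ^ 2 := by
    rw [← Finset.sum_sdiff hst, add_le_iff_nonpos_left]
    refine Finset.sum_nonpos fun i hi => ?_
    exact mul_nonpos_of_nonpos_of_nonneg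
      (sub_nonpos.2 (hs i (Finset.mem_sdiff.1 hi).2)) (sq_nonneg _)
  calc ∑ i ∈ t, c * ⟪J (v i), J u⟫ ^ 2
      = ∑ i ∈ t, l i * ⟪J (v i), J u⟫ ^ 2 + ∑ i ∈ t, (c - l i) * ⟪J (v i), J u⟫ ^ 2 := by
        rw [← Finset.sum_add_distrib]
        exact Finset.sum_congr rfl fun i _ => by ring
    _ ≤ ⟪A u, u⟫ + ∑ i ∈ s, (c - l i) * ⟪J (v i), J u⟫ ^ 2 :=
        add_le_add (hv.sum_mul_inner_sq_le hA u t) hsplit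

theorem sum_inv_mul_inner_sq_le (hv : IsPencilEigenbasis A J l v) (hA : A.IsPositive) {c : ℝ}
    (hc : 0 < c) (hcoer : ∀ y, c * ‖y‖ ^ 2 ≤ ⟪A y, y⟫ + ‖J y‖ ^ 2) (p : H) (s : Finset ι) :
    ∑ i ∈ s, (l i + 1)⁻¹ * ⟪p, v i⟫ ^ 2 ≤ ‖p‖ ^ 2 / c := by
  set Q := ∑ i ∈ s, (l i + 1)⁻¹ * ⟪p, v i⟫ ^ 2
  set z := ∑ i ∈ s, ((l i + 1)⁻¹ * ⟪p, v i⟫) • v i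
  have hpz : ⟪p, z⟫ = Q := by
    simp only [z, Q, inner_sum, real_inner_smul_right]
    exact Finset.sum_congr rfl fun i _ => by ring
  have henergy : ⟪A z, z⟫ + ‖J z‖ ^ 2 = Q := by
    rw [hv.inner_map_sum_self, hv.norm_sq_map_sum, ← Finset.sum_add_distrib]
    refine Finset.sum_congr rfl fun i _ => ?_
    have : l i + 1 ≠ 0 := by linarith [hv.eigenvalue_nonneg hA i]
    field_simp
  have hz : c * ‖z‖ ^ 2 ≤ Q := henergy ▸ hcoer z
  have hcs : Q ≤ ‖p‖ * ‖z‖ := hpz ▸ real_inner_le_norm p z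
  -- Cauchy–Schwarz and AM–GM: `2 * Q * c ≤ 2 * ‖p‖ * (c * ‖z‖) ≤ ‖p‖ ^ 2 + (c * ‖z‖) ^ 2`.
  rw [le_div_iff₀ hc]
  nlinarith [sq_nonneg (‖p‖ - c * ‖z‖), mul_le_mul_of_nonneg_right hcs hc.le,
    mul_le_mul_of_nonneg_left hz hc.le]

end Bessel

end IsPencilEigenbasis

theorem exists_ne_zero_forall_inner_sum_smul_eq_zero {ι κ : Type*} {s : Finset ι} {t : Finset κ}
    (hst : s.card < t.card) (x : ι → L) (y : κ → L) :
    ∃ d : κ → ℝ, (∃ j ∈ t, d j ≠ 0) ∧ ∀ i ∈ s, ⟪x i, ∑ j ∈ t, d j • y j⟫ = 0 := by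
  have hdep : ¬LinearIndepOn ℝ (fun j (i : s) => ⟪x i, y j⟫) (t : Set κ) := fun h => by
    refine hst.not_ge ?_
    simpa using h.fintype_card_le_finrank
  rw [linearIndepOn_finset_iff] at hdep
  push Not at hdep
  obtain ⟨d, hd, hne⟩ := hdep
  refine ⟨d, hne, fun i hi => ?_⟩
  simpa [inner_sum, real_inner_smul_right] using congrFun hd ⟨i, hi⟩

namespace IsPencilEigenbasis

variable [CompleteSpace L] {A' : H →L[ℝ] H} {l m : ℕ → ℝ} {u v : ℕ → H}

theorem eigenvalue_le_of_inner_le (hu : IsPencilEigenbasis A J l u)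
    (hv : IsPencilEigenbasis A' J m v) (hA : A.IsPositive) (hl : Monotone l) (hm : Monotone m)
    (hle : ∀ y, ⟪A y, y⟫ ≤ ⟪A' y, y⟫) (n : ℕ) : l n ≤ m n := by
  obtain ⟨d, ⟨j, hj, hdj⟩, horth⟩ := exists_ne_zero_forall_inner_sum_smul_eq_zero
    (s := Finset.range n) (t := Finset.range (n + 1)) (by simp) (fun i => J (u i))
    fun j => J (v j)
  set w := ∑ j ∈ Finset.range (n + 1), d j • v j
  have hw : ∀ i ∈ Finset.range n, ⟪J (u i), J w⟫ = 0 := by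
    simpa only [w, map_sum, map_smul] using horth
  have hpos : 0 < ‖J w‖ ^ 2 := by
    rw [hv.norm_sq_map_sum]
    exact Finset.sum_pos' (fun i _ => sq_nonneg (d i)) ⟨j, hj, by positivity⟩
  refine le_of_mul_le_mul_right ?_ hpos
  calc l n * ‖J w‖ ^ 2
      ≤ ⟪A w, w⟫ + ∑ i ∈ Finset.range n, (l n - l i) * ⟪J (u i), J w⟫ ^ 2 :=
        hu.mul_norm_sq_le hA (fun i hi => hl (not_lt.1 (Finset.mem_range.not.1 hi))) w
    _ = ⟪A w, w⟫ := by
        rw [Finset.sum_eq_zero fun i hi => by rw [hw i hi]; ring, add_zero]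
    _ ≤ ⟪A' w, w⟫ := hle w
    _ = ∑ i ∈ Finset.range (n + 1), m i * d i ^ 2 := hv.inner_map_sum_self _ _
    _ ≤ ∑ i ∈ Finset.range (n + 1), m n * d i ^ 2 := by
        refine Finset.sum_le_sum fun i hi => ?_
        gcongr
        exact hm (Finset.mem_range_succ_iff.1 hi)
    _ = m n * ‖J w‖ ^ 2 := by rw [hv.norm_sq_map_sum, Finset.mul_sum]

theorem sum_range_eigenvalue_le (hv : IsPencilEigenbasis A J m v) (hA : A.IsPositive)
    (hm : Monotone m) (hu : Orthonormal ℝ fun n => J (u n)) (N : ℕ) :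
    ∑ n ∈ Finset.range N, m n ≤ ∑ n ∈ Finset.range N, ⟪A (u n), u n⟫ := by
  have hterm (n : ℕ) : m N ≤
      ⟪A (u n), u n⟫ + ∑ i ∈ Finset.range N, (m N - m i) * ⟪J (v i), J (u n)⟫ ^ 2 := by
    have h := hv.mul_norm_sq_le hA (c := m N) (s := Finset.range N)
      (fun i hi => hm (not_lt.1 (Finset.mem_range.not.1 hi))) (u n)
    rwa [hu.1 n, one_pow, mul_one] at h
  have hbessel (i : ℕ) : ∑ n ∈ Finset.range N, ⟪J (v i), J (u n)⟫ ^ 2 ≤ 1 := by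
    simpa only [Real.norm_eq_abs, sq_abs, hv.orthonormal.1 i, one_pow, real_inner_comm] using
      hu.sum_inner_products_le (J (v i)) (s := Finset.range N)
  have hdouble : ∑ n ∈ Finset.range N, ∑ i ∈ Finset.range N, (m N - m i) * ⟪J (v i), J (u n)⟫ ^ 2 ≤
      ∑ i ∈ Finset.range N, (m N - m i) := by
    rw [Finset.sum_comm]
    refine Finset.sum_le_sum fun i hi => ?_
    rw [← Finset.mul_sum]
    exact mul_le_of_le_one_right (sub_nonneg.2 (hm (Finset.mem_range.1 hi).le)) (hbessel i)
  have hsum := Finset.sum_le_sum fun n (_ : n ∈ Finset.range N) => hterm n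
  rw [Finset.sum_add_distrib] at hsum
  rw [Finset.sum_sub_distrib] at hdouble
  linarith

theorem sum_range_sub_div_le {κ : Type*} [Fintype κ] (hu : IsPencilEigenbasis A J l u)
    (hv : IsPencilEigenbasis A' J m v) (hA : A.IsPositive) (hA' : A'.IsPositive)
    (hl : Monotone l) (hm : Monotone m) {c : ℝ} (hc : 0 < c)
    (hcoer : ∀ y, c * ‖y‖ ^ 2 ≤ ⟪A y, y⟫ + ‖J y‖ ^ 2) (p : κ → H)
    (hp : ∀ y, ⟪A' y, y⟫ = ⟪A y, y⟫ + ∑ k, ⟪p k, y⟫ ^ 2) (N : ℕ) :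
    ∑ n ∈ Finset.range N, (m n - l n) / (l n + 1) ≤ ∑ k, ‖p k‖ ^ 2 / c := by
  have hl₁ (n : ℕ) : 0 < l n + 1 := by linarith [hu.eigenvalue_nonneg hA n]
  have hkyfan (M : ℕ) : 0 ≤ ∑ n ∈ Finset.range M, (l n + ∑ k, ⟪p k, u n⟫ ^ 2 - m n) := by
    have h := hv.sum_range_eigenvalue_le hA' hm hu.orthonormal M
    simp only [hp, hu.eigenvalue_eq] at h
    rw [Finset.sum_sub_distrib]
    exact sub_nonneg.2 h
  have habel := sum_range_mul_nonneg_of_antitone (w := fun n => (l n + 1)⁻¹)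
    (fun i j hij => inv_anti₀ (hl₁ i) (by linarith [hl hij]))
    (fun n => (inv_pos.2 (hl₁ n)).le) hkyfan N
  calc ∑ n ∈ Finset.range N, (m n - l n) / (l n + 1)
      ≤ ∑ n ∈ Finset.range N, (m n - l n) / (l n + 1) +
          ∑ n ∈ Finset.range N, (l n + 1)⁻¹ * (l n + ∑ k, ⟪p k, u n⟫ ^ 2 - m n) :=
        le_add_of_nonneg_right habel
    _ = ∑ n ∈ Finset.range N, ∑ k, (l n + 1)⁻¹ * ⟪p k, u n⟫ ^ 2 := by
        rw [← Finset.sum_add_distrib]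
        refine Finset.sum_congr rfl fun n _ => ?_
        rw [← Finset.mul_sum]
        ring
    _ = ∑ k, ∑ n ∈ Finset.range N, (l n + 1)⁻¹ * ⟪p k, u n⟫ ^ 2 := Finset.sum_comm
    _ ≤ ∑ k, ‖p k‖ ^ 2 / c :=
        Finset.sum_le_sum fun k _ => hu.sum_inv_mul_inner_sq_le hA hc hcoer (p k) _

end IsPencilEigenbasis

section Existence

variable {c : ℝ} {R : L →L[ℝ] H}

theorem exists_pencil_resolvent [CompleteSpace H] [CompleteSpace L] (hc : 0 < c)
    (hcoer : ∀ y, c * ‖y‖ ^ 2 ≤ ⟪A y, y⟫ + ‖J y‖ ^ 2) :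
    ∃ R : L →L[ℝ] H, ∀ f z, ⟪A (R f), z⟫ + ⟪J (R f), J z⟫ = ⟪f, J z⟫ := by
  set S : H →L[ℝ] H := A + J.adjoint ∘L J
  have hS (y z : H) : ⟪S y, z⟫ = ⟪A y, z⟫ + ⟪J y, J z⟫ := by
    simp [S, inner_add_left, ContinuousLinearMap.adjoint_inner_left]
  have hB : IsCoercive ((innerSL ℝ : H →L[ℝ] H →L[ℝ] ℝ) ∘L S) := by
    refine ⟨c, hc, fun y => ?_⟩
    change c * ‖y‖ * ‖y‖ ≤ ⟪S y, y⟫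
    rw [hS, real_inner_self_eq_norm_sq, mul_assoc, ← sq]
    exact hcoer y
  refine ⟨hB.continuousLinearEquivOfBilin.symm ∘L J.adjoint, fun f z => ?_⟩
  rw [← hS, ← ContinuousLinearMap.adjoint_inner_left]
  exact (hB.continuousLinearEquivOfBilin_apply _ z).symm.trans <|
    congrArg (⟪·, z⟫) (hB.continuousLinearEquivOfBilin.apply_symm_apply _)

theorem isSymmetric_comp_resolvent (hA : (A : H →ₗ[ℝ] H).IsSymmetric)
    (hR : ∀ f z, ⟪A (R f), z⟫ + ⟪J (R f), J z⟫ = ⟪f, J z⟫) :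
    (J ∘L R : L →ₗ[ℝ] L).IsSymmetric := fun f g =>
  calc ⟪J (R f), g⟫ = ⟪A (R g), R f⟫ + ⟪J (R g), J (R f)⟫ := by rw [hR, real_inner_comm]
    _ = ⟪A (R f), R g⟫ + ⟪J (R f), J (R g)⟫ := by
        rw [real_inner_comm (J (R g)), real_inner_comm (R g)]
        exact congrArg (· + _) (hA (R g) (R f))
    _ = ⟪f, J (R g)⟫ := hR f (R g)

theorem eq_zero_of_coercive (hc : 0 < c) (hcoer : ∀ y, c * ‖y‖ ^ 2 ≤ ⟪A y, y⟫ + ‖J y‖ ^ 2) {y : H}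
    (hAy : ⟪A y, y⟫ = 0) (hJy : J y = 0) : y = 0 := by
  have h := hcoer y
  rw [hAy, hJy, norm_zero, zero_pow two_ne_zero, add_zero] at h
  exact norm_eq_zero.1 (pow_eq_zero_iff two_ne_zero |>.1
    (le_antisymm (nonpos_of_mul_nonpos_right h hc) (sq_nonneg _)))

theorem eigenspace_comp_resolvent_le (hc : 0 < c)
    (hcoer : ∀ y, c * ‖y‖ ^ 2 ≤ ⟪A y, y⟫ + ‖J y‖ ^ 2) (hJ : DenseRange J)
    (hR : ∀ f z, ⟪A (R f), z⟫ + ⟪J (R f), J z⟫ = ⟪f, J z⟫) (k : ℝ) :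
    Module.End.eigenspace (J ∘L R : L →ₗ[ℝ] L) k ≤
      ⨆ t, (pencilEigenspace A J t).map (J : H →ₗ[ℝ] L) := by
  intro f hf
  replace hf : J (R f) = k • f := Module.End.mem_eigenspace_iff.1 hf
  rcases eq_or_ne k 0 with rfl | hk
  · rw [zero_smul] at hf
    have henergy : ⟪A (R f), R f⟫ = 0 := by simpa [hf] using hR f (R f)
    have hRf : R f = 0 := eq_zero_of_coercive hc hcoer henergy hf
    have hf₀ : f = 0 := hJ.eq_zero_of_inner_left ℝ fun z => by simp [← hR f z, hRf]
    exact hf₀ ▸ zero_mem _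
  · have hfR : f = k⁻¹ • J (R f) := by rw [hf, inv_smul_smul₀ hk]
    have hmem : R f ∈ pencilEigenspace A J (k⁻¹ - 1) := mem_pencilEigenspace.2 fun z => by
      have h := hR f z
      rw [hfR, real_inner_smul_left, ← hfR] at h
      linarith
    rw [hfR]
    exact Submodule.smul_mem _ _ (Submodule.mem_iSup_of_mem _ (Submodule.mem_map_of_mem hmem))

theorem orthogonal_iSup_map_pencilEigenspace_eq_bot [CompleteSpace H] [CompleteSpace L]
    (hA : (A : H →ₗ[ℝ] H).IsSymmetric) (hc : 0 < c)
    (hcoer : ∀ y, c * ‖y‖ ^ 2 ≤ ⟪A y, y⟫ + ‖J y‖ ^ 2)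
    (hcomp : IsCompactOperator J) (hJ : DenseRange J) :
    (⨆ t, (pencilEigenspace A J t).map (J : H →ₗ[ℝ] L))ᗮ = ⊥ := by
  obtain ⟨R, hR⟩ := exists_pencil_resolvent hc hcoer
  refine eq_bot_mono (Submodule.orthogonal_le ?_)
    (ContinuousLinearMap.orthogonalComplement_iSup_eigenspaces_eq_bot
      (T := J ∘L R) (hcomp.comp_clm R) (isSymmetric_comp_resolvent hA hR))
  exact iSup_le fun k => eigenspace_comp_resolvent_le hc hcoer hJ hR k

theorem exists_norm_map_eq_one_of_rank_le_one (hc : 0 < c)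
    (hcoer : ∀ y, c * ‖y‖ ^ 2 ≤ ⟪A y, y⟫ + ‖J y‖ ^ 2) {t : ℝ}
    (hrank : Module.rank ℝ (pencilEigenspace A J t) ≤ 1) (hbot : pencilEigenspace A J t ≠ ⊥) :
    ∃ v ∈ pencilEigenspace A J t, ‖J v‖ = 1 ∧ pencilEigenspace A J t ≤ ℝ ∙ v := by
  obtain ⟨w, hw, hspan⟩ := (rank_submodule_le_one_iff _).1 hrank
  have hw₀ : w ≠ 0 := by
    rintro rfl
    exact hbot (by simpa using hspan)
  have hJw : ‖J w‖ ≠ 0 := norm_ne_zero_iff.2 fun h =>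
    hw₀ (eq_zero_of_coercive hc hcoer (by simp [mem_pencilEigenspace.1 hw w, h]) h)
  refine ⟨‖J w‖⁻¹ • w, Submodule.smul_mem _ _ hw, ?_, ?_⟩
  · rw [map_smul, norm_smul, norm_inv, norm_norm, inv_mul_cancel₀ hJw]
  · rwa [Submodule.span_singleton_smul_eq (IsUnit.mk0 _ (inv_ne_zero hJw))]

theorem exists_isPencilEigenbasis [CompleteSpace H] [CompleteSpace L]
    (hA : (A : H →ₗ[ℝ] H).IsSymmetric)
    (hc : 0 < c) (hcoer : ∀ y, c * ‖y‖ ^ 2 ≤ ⟪A y, y⟫ + ‖J y‖ ^ 2)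
    (hcomp : IsCompactOperator J) (hJ : DenseRange J)
    (hrank : ∀ t, Module.rank ℝ (pencilEigenspace A J t) ≤ 1) {ι : Type*} {l : ι → ℝ}
    (hl : Function.Injective l) (hrange : Set.range l = {t | pencilEigenspace A J t ≠ ⊥}) :
    ∃ v, IsPencilEigenbasis A J l v := by
  choose v hmem hnorm hspan using fun i =>
    exists_norm_map_eq_one_of_rank_le_one hc hcoer (hrank (l i))
      (hrange.subset (Set.mem_range_self i))
  refine ⟨v, hmem, ⟨hnorm, fun i j hij =>
    inner_map_eq_zero_of_mem_pencilEigenspace hA (hl.ne hij) (hmem i) (hmem j)⟩, ?_⟩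
  refine eq_bot_mono (Submodule.orthogonal_le (iSup_le fun t => ?_))
    (orthogonal_iSup_map_pencilEigenspace_eq_bot hA hc hcoer hcomp hJ)
  by_cases hbot : pencilEigenspace A J t = ⊥
  · simp [hbot]
  · obtain ⟨i, rfl⟩ : t ∈ Set.range l := hrange.superset hbot
    calc (pencilEigenspace A J (l i)).map (J : H →ₗ[ℝ] L)
        ≤ (ℝ ∙ v i).map (J : H →ₗ[ℝ] L) := Submodule.map_mono (hspan i)
      _ = ℝ ∙ J (v i) := by rw [Submodule.map_span, Set.image_singleton]; rfl
      _ ≤ Submodule.span ℝ (Set.range fun i => J (v i)) :=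
        Submodule.span_mono (Set.singleton_subset_iff.2 (Set.mem_range_self i))

end Existence

end Pencil

section KernelOperator

open scoped RealInnerProductSpace

variable {X H : Type*} [MeasurableSpace X] {μ : Measure X} [NormedAddCommGroup H]
  [InnerProductSpace ℝ H]

/-- The Hilbert–Schmidt operator `h ↦ (x ↦ ⟪k x, h⟫)` with square-integrable kernel `k`. -/
noncomputable def kernelOperator (k : Lp H 2 μ) : H →L[ℝ] Lp ℝ 2 μ :=
  (ContinuousLinearMap.compLpL₂ 2 μ (innerSL ℝ : H →L[ℝ] H →L[ℝ] ℝ)).flip k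

theorem coeFn_kernelOperator (k : Lp H 2 μ) (h : H) :
    kernelOperator k h =ᵐ[μ] fun x => ⟪k x, h⟫ := by
  filter_upwards [(innerSL ℝ h : H →L[ℝ] ℝ).coeFn_compLp k] with x hx
  rw [real_inner_comm, ← innerSL_apply_apply ℝ, ← hx]
  rfl

theorem kernelOperator_indicatorConstLp {s : Set X} (hs : MeasurableSet s) (hμs : μ s ≠ ⊤)
    (c : H) :
    kernelOperator (indicatorConstLp 2 hs hμs c) =
      (ContinuousLinearMap.toSpanSingleton ℝ (indicatorConstLp 2 hs hμs (1 : ℝ))) ∘L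
        (innerSL ℝ c : H →L[ℝ] ℝ) := by
  ext1 h
  refine Lp.ext ?_
  change _ =ᵐ[μ] (⟪c, h⟫ • indicatorConstLp 2 hs hμs (1 : ℝ) : Lp ℝ 2 μ)
  filter_upwards [coeFn_kernelOperator (indicatorConstLp 2 hs hμs c) h,
    Lp.coeFn_smul ⟪c, h⟫ (indicatorConstLp 2 hs hμs (1 : ℝ)),
    indicatorConstLp_coeFn (hs := hs) (hμs := hμs) (p := 2) (c := c),
    indicatorConstLp_coeFn (hs := hs) (hμs := hμs) (p := 2) (c := (1 : ℝ))]
    with x hkernel hsmul hc hone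
  rw [hkernel, hc, hsmul, Pi.smul_apply, hone]
  by_cases hx : x ∈ s <;> simp [hx]

theorem isCompactOperator_kernelOperator (k : Lp H 2 μ) :
    IsCompactOperator (kernelOperator k) := by
  refine Lp.induction ENNReal.ofNat_ne_top
    (motive := fun k : Lp H 2 μ => IsCompactOperator (kernelOperator k)) ?_ ?_ ?_ k
  · intro c s hs hμs
    rw [Lp.simpleFunc.coe_indicatorConst, kernelOperator_indicatorConstLp]
    have hc : IsCompactOperator (innerSL ℝ c : H →L[ℝ] ℝ) :=
      isCompactOperator_of_locallyCompactSpace_dom (innerSL ℝ c : H →L[ℝ] ℝ)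
    exact hc.clm_comp (ContinuousLinearMap.toSpanSingleton ℝ (indicatorConstLp 2 hs hμs.ne (1 : ℝ)))
  · intro f g hf hg _ hfc hgc
    have hadd : kernelOperator (hf.toLp f + hg.toLp g) =
        kernelOperator (hf.toLp f) + kernelOperator (hg.toLp g) := map_add _ _ _
    rw [hadd]
    exact hfc.add hgc
  · have hcont : Continuous fun k : Lp H 2 μ => kernelOperator k :=
      (ContinuousLinearMap.compLpL₂ 2 μ (innerSL ℝ : H →L[ℝ] H →L[ℝ] ℝ)).flip.continuous
    exact (isClosed_setOfPred_isCompactOperator (𝕜₁ := ℝ) (σ₁₂ := RingHom.id ℝ)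
      (M₁ := H) (M₂ := Lp ℝ 2 μ)).preimage hcont

end KernelOperator

section EnergySpace

open scoped RealInnerProductSpace

/-- The measure `δ₀ + dx` on `[0, 1]`. An element `h` of its `L²` space encodes the absolutely
continuous function with value `h 0` at `0` and derivative `h` on `(0, 1]`. -/
noncomputable def pointedLebesgue : Measure ℝ :=
  Measure.dirac 0 + volume.restrict (Set.Ioc 0 1)

instance : IsFiniteMeasure pointedLebesgue := by unfold pointedLebesgue; infer_instance

theorem ae_pointedLebesgue_iff {p : ℝ → Prop} :
    (∀ᵐ x ∂pointedLebesgue, p x) ↔ p 0 ∧ ∀ᵐ x ∂volume.restrict (Set.Ioc 0 1), p x := by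
  rw [pointedLebesgue, ae_add_measure_iff, ae_dirac_eq]
  rfl

theorem pointedLebesgue_real_Iic {x : ℝ} (hx : x ∈ Set.Icc (0 : ℝ) 1) :
    pointedLebesgue.real (Set.Iic x) = 1 + x := by
  rw [pointedLebesgue, measureReal_add_apply, measureReal_restrict_apply measurableSet_Iic,
    Set.inter_comm, Set.Ioc_inter_Iic, min_eq_right hx.2, Real.volume_real_Ioc_of_le hx.1]
  simp [measureReal_def, hx.1]

theorem setIntegral_Iic_pointedLebesgue {h : ℝ → ℝ} (hi : Integrable h pointedLebesgue) {x : ℝ}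
    (hx : x ∈ Set.Icc (0 : ℝ) 1) :
    ∫ t in Set.Iic x, h t ∂pointedLebesgue = h 0 + ∫ t in (0 : ℝ)..x, h t := by
  classical
  unfold pointedLebesgue at hi ⊢
  rw [Measure.restrict_add, integral_add_measure hi.left_of_add_measure.integrableOn
    hi.right_of_add_measure.integrableOn, setIntegral_dirac, if_pos (Set.mem_Iic.2 hx.1),
    Measure.restrict_restrict measurableSet_Iic, Set.inter_comm, Set.Ioc_inter_Iic,
    min_eq_right hx.2, intervalIntegral.integral_of_le hx.1]

/-- The Hilbert space of finite-energy functions on `[0, 1]`, with squared norm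
`y(0)² + ∫ (y')²`. -/
abbrev EnergySpace : Type := Lp ℝ 2 pointedLebesgue

/-- The Riesz representative of the evaluation at `x`. Clamping `x` at `0` makes it continuous
on the whole line. -/
noncomputable def evalKernel (x : ℝ) : EnergySpace :=
  indicatorConstLp 2 (measurableSet_Iic : MeasurableSet (Set.Iic (max x 0)))
    (measure_ne_top _ _) (1 : ℝ)

theorem inner_evalKernel_evalKernel {x z : ℝ} (hx : x ∈ Set.Icc (0 : ℝ) 1) (hxz : x ≤ z) :
    ⟪evalKernel x, evalKernel z⟫ = 1 + x := by
  rw [evalKernel, evalKernel, L2.inner_indicatorConstLp_indicatorConstLp, Set.Iic_inter_Iic,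
    max_eq_left hx.1, max_eq_left (hx.1.trans hxz), min_eq_left hxz, pointedLebesgue_real_Iic hx]
  simp

theorem inner_evalKernel (x : ℝ) (y : EnergySpace) :
    ⟪evalKernel x, y⟫ = ∫ t in Set.Iic (max x 0), y t ∂pointedLebesgue :=
  L2.inner_indicatorConstLp_one _ _ _

theorem inner_evalKernel_eq_add_integral (y : EnergySpace) {x : ℝ} (hx : x ∈ Set.Icc (0 : ℝ) 1) :
    ⟪evalKernel x, y⟫ = y 0 + ∫ t in (0 : ℝ)..x, y t := by
  rw [inner_evalKernel, max_eq_left hx.1,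
    setIntegral_Iic_pointedLebesgue ((Lp.memLp y).integrable one_le_two) hx]

theorem inner_evalKernel_zero (y : EnergySpace) : ⟪evalKernel 0, y⟫ = y 0 := by
  simp [inner_evalKernel_eq_add_integral]

theorem inner_evalKernel_of_ae_eq {y : EnergySpace} {g : ℝ → ℝ}
    (hg : ∀ᵐ t ∂volume.restrict (Set.Ioc 0 1), y t = g t) {x : ℝ} (hx : x ∈ Set.Icc (0 : ℝ) 1) :
    ⟪evalKernel x, y⟫ = ⟪evalKernel 0, y⟫ + ∫ t in (0 : ℝ)..x, g t := by
  rw [inner_evalKernel_eq_add_integral y hx, inner_evalKernel_zero]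
  congr 1
  refine intervalIntegral.integral_congr_ae ?_
  rw [ae_restrict_iff' measurableSet_Ioc] at hg
  filter_upwards [hg] with t ht htx
  rw [Set.uIoc_of_le hx.1] at htx
  exact ht ⟨htx.1, htx.2.trans hx.2⟩

theorem coeFn_evalKernel (x : ℝ) :
    evalKernel x =ᵐ[pointedLebesgue] (Set.Iic (max x 0)).indicator 1 :=
  indicatorConstLp_coeFn

theorem norm_evalKernel_le (x : ℝ) : ‖evalKernel x‖ ≤ √(pointedLebesgue.real Set.univ) := by
  rw [evalKernel, norm_indicatorConstLp two_ne_zero ENNReal.ofNat_ne_top, Real.sqrt_eq_rpow]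
  simp only [norm_one, one_mul, ENNReal.toReal_ofNat]
  gcongr
  exacts [measure_ne_top _ _, Set.subset_univ _]

theorem norm_evalKernel_sub_le {x z : ℝ} (hxz : x ≤ z) :
    ‖evalKernel z - evalKernel x‖ ≤ √(z - x) := by
  have hmax : max x 0 ≤ max z 0 := max_le_max_right 0 hxz
  have hsplit : evalKernel z = evalKernel x + indicatorConstLp 2
      (measurableSet_Ioc : MeasurableSet (Set.Ioc (max x 0) (max z 0)))
      (measure_ne_top _ _) (1 : ℝ) := by
    unfold evalKernel
    rw [← indicatorConstLp_disjoint_union]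
    · simp only [Set.Iic_union_Ioc_eq_Iic hmax]
    · exact Set.Iic_disjoint_Ioc le_rfl
  have hmeasure : pointedLebesgue.real (Set.Ioc (max x 0) (max z 0)) ≤ z - x := by
    have hzero : (0 : ℝ) ∉ Set.Ioc (max x 0) (max z 0) := by simp
    rw [pointedLebesgue, measureReal_add_apply, measureReal_def (Measure.dirac 0),
      Measure.dirac_apply' _ measurableSet_Ioc, Set.indicator_of_notMem hzero,
      ENNReal.toReal_zero, zero_add]
    calc (volume.restrict (Set.Ioc 0 1)).real (Set.Ioc (max x 0) (max z 0))
        ≤ volume.real (Set.Ioc (max x 0) (max z 0)) :=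
          ENNReal.toReal_mono (by simp) (Measure.restrict_apply_le _ _)
      _ = max z 0 - max x 0 := Real.volume_real_Ioc_of_le hmax
      _ ≤ z - x := (max_sub_max_le_max z 0 x 0).trans_eq (by simpa using hxz)
  rw [hsplit, add_sub_cancel_left, norm_indicatorConstLp two_ne_zero ENNReal.ofNat_ne_top,
    Real.sqrt_eq_rpow]
  simp only [norm_one, one_mul, ENNReal.toReal_ofNat]
  gcongr

theorem continuous_evalKernel : Continuous evalKernel := by
  have hdist (x z : ℝ) : dist (evalKernel x) (evalKernel z) ≤ √(dist x z) := by
    rcases le_total x z with hxz | hzx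
    · rw [dist_comm, dist_comm x, dist_eq_norm, Real.dist_eq, abs_of_nonneg (sub_nonneg.2 hxz)]
      exact norm_evalKernel_sub_le hxz
    · rw [dist_eq_norm, Real.dist_eq, abs_of_nonneg (sub_nonneg.2 hzx)]
      exact norm_evalKernel_sub_le hzx
  refine continuous_iff_continuousAt.2 fun x => tendsto_iff_dist_tendsto_zero.2 ?_
  refine squeeze_zero (fun _ => dist_nonneg) (fun z => hdist z x) ?_
  have hsqrt : Continuous fun z => √(dist z x) := by fun_prop
  simpa using hsqrt.tendsto x

theorem continuous_inner_evalKernel (y : EnergySpace) : Continuous fun x => ⟪evalKernel x, y⟫ :=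
  continuous_evalKernel.inner continuous_const

theorem exists_energySpace_ae_eq (c : ℝ) {g : ℝ → ℝ} (hg : ContinuousOn g (Set.Icc 0 1)) :
    ∃ y : EnergySpace, ⟪evalKernel 0, y⟫ = c ∧
      ∀ᵐ t ∂volume.restrict (Set.Ioc 0 1), y t = g t := by
  have hae : Function.update g 0 c =ᵐ[volume.restrict (Set.Ioc 0 1)] g := by
    filter_upwards [ae_restrict_mem measurableSet_Ioc] with t ht
    exact Function.update_of_ne ht.1.ne' c g
  obtain ⟨M, hM⟩ := isCompact_Icc.exists_bound_of_continuousOn hg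
  have hmem : MemLp (Function.update g 0 c) 2 pointedLebesgue := by
    refine MemLp.of_bound (aestronglyMeasurable_dirac.add_measure ?_) (max ‖c‖ M)
      (ae_pointedLebesgue_iff.2 ⟨by simp, ?_⟩)
    · exact ((hg.mono Set.Ioc_subset_Icc_self).aestronglyMeasurable measurableSet_Ioc).congr
        hae.symm
    · filter_upwards [hae, ae_restrict_mem measurableSet_Ioc] with t htg ht
      exact htg ▸ (hM t (Set.Ioc_subset_Icc_self ht)).trans (le_max_right _ _)
  obtain ⟨hzero, hderiv⟩ := ae_pointedLebesgue_iff.1 hmem.coeFn_toLp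
  exact ⟨hmem.toLp, by simp [inner_evalKernel_zero, hzero], Filter.EventuallyEq.trans hderiv hae⟩

variable (μ : Measure ℝ) [IsFiniteMeasure μ]

theorem memLp_evalKernel : MemLp evalKernel 2 μ :=
  MemLp.of_bound continuous_evalKernel.aestronglyMeasurable _ (.of_forall norm_evalKernel_le)

/-- The map sending a finite-energy function to its class in `L²(μ)`. -/
noncomputable def energyEmbedding : EnergySpace →L[ℝ] Lp ℝ 2 μ :=
  kernelOperator (memLp_evalKernel μ).toLp

theorem coeFn_energyEmbedding (y : EnergySpace) :
    energyEmbedding μ y =ᵐ[μ] fun x => ⟪evalKernel x, y⟫ := by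
  filter_upwards [coeFn_kernelOperator (memLp_evalKernel μ).toLp y,
    (memLp_evalKernel μ).coeFn_toLp] with x hx hk
  rw [energyEmbedding, hx, hk]

theorem isCompactOperator_energyEmbedding : IsCompactOperator (energyEmbedding μ) :=
  isCompactOperator_kernelOperator _

theorem inner_energyEmbedding_right (f : Lp ℝ 2 μ) (z : EnergySpace) :
    ⟪f, energyEmbedding μ z⟫ = ∫ s, f s * ⟪evalKernel s, z⟫ ∂μ := by
  rw [L2.inner_def]
  refine integral_congr_ae ?_
  filter_upwards [coeFn_energyEmbedding μ z] with s hs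
  rw [hs, RCLike.inner_apply, conj_trivial, mul_comm]

theorem inner_energyEmbedding (y z : EnergySpace) :
    ⟪energyEmbedding μ y, energyEmbedding μ z⟫ =
      ∫ s, ⟪evalKernel s, y⟫ * ⟪evalKernel s, z⟫ ∂μ := by
  rw [inner_energyEmbedding_right]
  refine integral_congr_ae ?_
  filter_upwards [coeFn_energyEmbedding μ y] with s hs
  rw [hs]

theorem memLp_inner_evalKernel (y : EnergySpace) : MemLp (fun s => ⟪evalKernel s, y⟫) 2 μ :=
  (Lp.memLp (energyEmbedding μ y)).ae_eq (coeFn_energyEmbedding μ y)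

theorem norm_sq_energyEmbedding (y : EnergySpace) :
    ‖energyEmbedding μ y‖ ^ 2 = ∫ s, ⟪evalKernel s, y⟫ ^ 2 ∂μ := by
  rw [← real_inner_self_eq_norm_sq, inner_energyEmbedding]
  simp only [sq]

theorem integrable_inner_evalKernel (y : EnergySpace) :
    Integrable (fun s => ⟪evalKernel s, y⟫) μ :=
  (memLp_inner_evalKernel μ y).integrable one_le_two

variable {μ}

theorem denseRange_energyEmbedding (hμ : ∀ᵐ x ∂μ, x ∈ Set.Icc (0 : ℝ) 1) :
    DenseRange (energyEmbedding μ) := by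
  suffices h : (energyEmbedding μ).rangeᗮ = ⊥ from
    Submodule.dense_iff_topologicalClosure_eq_top.2 (Submodule.topologicalClosure_eq_top_iff.2 h)
  refine (Submodule.eq_bot_iff _).2 fun f hf => Lp.eq_zero_iff_ae_eq_zero.2 ?_
  refine ae_eq_zero_of_integral_contDiff_smul_eq_zero
    ((Lp.memLp f).integrable one_le_two).locallyIntegrable fun φ hφ _ => ?_
  have hφ' : Continuous (deriv φ) := hφ.continuous_deriv (by simp)
  obtain ⟨y, hy₀, hy⟩ := exists_energySpace_ae_eq (φ 0) hφ'.continuousOn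
  have hyφ (x : ℝ) (hx : x ∈ Set.Icc (0 : ℝ) 1) : ⟪evalKernel x, y⟫ = φ x := by
    rw [inner_evalKernel_of_ae_eq hy hx, hy₀, intervalIntegral.integral_deriv_eq_sub
      (fun t _ => (hφ.differentiable (by simp)).differentiableAt) (hφ'.intervalIntegrable _ _),
      add_sub_cancel]
  have hfy : ⟪f, energyEmbedding μ y⟫ = 0 :=
    (Submodule.mem_orthogonal' _ f).1 hf _ (LinearMap.mem_range_self _ y)
  rw [← hfy, inner_energyEmbedding_right]
  refine integral_congr_ae ?_
  filter_upwards [hμ] with s hs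
  rw [hyφ s hs, smul_eq_mul, mul_comm]

end EnergySpace

section TailIntegral

variable {μ : Measure ℝ} [NullSingletonClass μ]

theorem setIntegral_le_max_eq_intervalIntegral (hμ : ∀ᵐ x ∂μ, x ∈ Set.Icc (0 : ℝ) 1) (f : ℝ → ℝ)
    {t : ℝ} (ht : t ∈ Set.Icc (0 : ℝ) 1) :
    ∫ s in {s | t ≤ max s 0}, f s ∂μ = ∫ s in t..1, f s ∂μ := by
  rw [intervalIntegral.integral_of_le ht.2]
  refine setIntegral_congr_set ?_
  filter_upwards [hμ, Measure.ae_ne μ t] with s hs hst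
  change (t ≤ max s 0) = (t < s ∧ s ≤ 1)
  rw [max_eq_left hs.1, hst.symm.le_iff_lt, eq_true hs.2, and_true]

theorem continuous_tailIntegral {f : ℝ → ℝ} (hf : Integrable f μ) :
    Continuous fun t => ∫ s in t..1, f s ∂μ := by
  simp_rw [intervalIntegral.integral_symm 1]
  exact (intervalIntegral.continuous_primitive (fun _ _ => hf.intervalIntegrable) 1).neg

theorem memLp_tailIntegral {f : ℝ → ℝ} (hf : Integrable f μ) :
    MemLp (fun t => ∫ s in t..1, f s ∂μ) 2 pointedLebesgue :=
  MemLp.of_bound (continuous_tailIntegral hf).aestronglyMeasurable (∫ s, ‖f s‖ ∂μ)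
    (.of_forall fun _ => intervalIntegral.norm_integral_le_integral_norm_uIoc.trans
      (setIntegral_le_integral hf.norm (.of_forall fun _ => norm_nonneg _)))

end TailIntegral

section WeightedEnergy

open scoped RealInnerProductSpace

variable {μ : Measure ℝ} [IsFiniteMeasure μ]

theorem sq_inner_evalKernel_sub_le (y : EnergySpace) {x : ℝ} (hx : x ∈ Set.Icc (0 : ℝ) 1) :
    (⟪evalKernel x, y⟫ - ⟪evalKernel 0, y⟫) ^ 2 ≤ ‖y‖ ^ 2 - ⟪evalKernel 0, y⟫ ^ 2 := by
  set c := ⟪evalKernel 0, y⟫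
  have hzero : (0 : ℝ) ∈ Set.Icc (0 : ℝ) 1 := ⟨le_rfl, zero_le_one⟩
  have h00 : ⟪evalKernel 0, evalKernel 0⟫ = 1 := by
    rw [inner_evalKernel_evalKernel hzero le_rfl, add_zero]
  have h0x : ⟪evalKernel 0, evalKernel x⟫ = 1 := by
    rw [inner_evalKernel_evalKernel hzero hx.1, add_zero]
  have hinner : ⟪evalKernel x - evalKernel 0, y - c • evalKernel 0⟫ = ⟪evalKernel x, y⟫ - c := by
    rw [inner_sub_right, inner_sub_left, inner_sub_left, real_inner_smul_right,
      real_inner_smul_right, h00, real_inner_comm, real_inner_comm _ (evalKernel x), h0x]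
    ring
  have hkernel : ‖evalKernel x - evalKernel 0‖ ^ 2 ≤ 1 := by
    rw [norm_sub_sq_real, ← real_inner_self_eq_norm_sq, ← real_inner_self_eq_norm_sq,
      inner_evalKernel_evalKernel hx le_rfl, h00, real_inner_comm, h0x]
    linarith [hx.2]
  have hy : ‖y - c • evalKernel 0‖ ^ 2 = ‖y‖ ^ 2 - c ^ 2 := by
    rw [norm_sub_sq_real, norm_smul, mul_pow, Real.norm_eq_abs, sq_abs,
      ← real_inner_self_eq_norm_sq (evalKernel 0), h00, real_inner_smul_right, real_inner_comm]
    ring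
  calc (⟪evalKernel x, y⟫ - c) ^ 2
      ≤ (‖evalKernel x - evalKernel 0‖ * ‖y - c • evalKernel 0‖) ^ 2 := by
        rw [← hinner]
        exact sq_le_sq.2 ((abs_real_inner_le_norm _ _).trans (le_abs_self _))
    _ ≤ 1 * (‖y‖ ^ 2 - c ^ 2) := by rw [mul_pow, ← hy]; gcongr
    _ = ‖y‖ ^ 2 - c ^ 2 := one_mul _

theorem measureReal_univ_mul_sq_inner_evalKernel_zero_le
    (hμ : ∀ᵐ x ∂μ, x ∈ Set.Icc (0 : ℝ) 1) (y : EnergySpace) :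
    μ.real Set.univ * ⟪evalKernel 0, y⟫ ^ 2 ≤
      2 * ‖energyEmbedding μ y‖ ^ 2 +
        2 * (μ.real Set.univ * (‖y‖ ^ 2 - ⟪evalKernel 0, y⟫ ^ 2)) := by
  have hsq : Integrable (fun s => ⟪evalKernel s, y⟫ ^ 2) μ :=
    (memLp_inner_evalKernel μ y).integrable_sq
  have hpointwise : ∀ᵐ s ∂μ, ⟪evalKernel 0, y⟫ ^ 2 ≤
      2 * ⟪evalKernel s, y⟫ ^ 2 + 2 * (‖y‖ ^ 2 - ⟪evalKernel 0, y⟫ ^ 2) := by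
    filter_upwards [hμ] with s hs
    linarith [sq_inner_evalKernel_sub_le y hs,
      sq_nonneg (2 * ⟪evalKernel s, y⟫ - ⟪evalKernel 0, y⟫)]
  have hint := integral_mono_ae (integrable_const _)
    ((hsq.const_mul 2).add (integrable_const _)) hpointwise
  simp only [Pi.add_apply] at hint
  rw [integral_add (hsq.const_mul 2) (integrable_const _), integral_const_mul,
    ← norm_sq_energyEmbedding, integral_const, integral_const, smul_eq_mul, smul_eq_mul] at hint
  linarith

theorem integral_mul_inner_evalKernel {f : ℝ → ℝ} (hf : Integrable f μ) (z : EnergySpace) :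
    ∫ s, f s * ⟪evalKernel s, z⟫ ∂μ =
      ∫ t, (∫ s in {s | t ≤ max s 0}, f s ∂μ) * z t ∂pointedLebesgue := by
  have hmeas : MeasurableSet {p : ℝ × ℝ | p.2 ≤ max p.1 0} :=
    measurableSet_le measurable_snd (measurable_fst.max measurable_const)
  have hint : Integrable (Function.uncurry fun s t => {s | t ≤ max s 0}.indicator f s * z t)
      (μ.prod pointedLebesgue) := by
    refine ((hf.mul_prod ((Lp.memLp z).integrable one_le_two)).indicator hmeas).congr
      (.of_forall fun p => ?_)
    simp only [Set.indicator, Set.mem_ofPred_eq, Function.uncurry, ite_mul, zero_mul]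
  calc ∫ s, f s * ⟪evalKernel s, z⟫ ∂μ
      = ∫ s, ∫ t, {s | t ≤ max s 0}.indicator f s * z t ∂pointedLebesgue ∂μ := by
        refine integral_congr_ae (.of_forall fun s => ?_)
        simp only [inner_evalKernel, ← integral_indicator measurableSet_Iic, ← integral_const_mul]
        congr 1 with t
        simp only [Set.indicator, Set.mem_Iic, Set.mem_ofPred_eq, mul_ite, mul_zero, ite_mul,
          zero_mul]
    _ = ∫ t, ∫ s, {s | t ≤ max s 0}.indicator f s * z t ∂μ ∂pointedLebesgue :=
        integral_integral_swap hint
    _ = ∫ t, (∫ s in {s | t ≤ max s 0}, f s ∂μ) * z t ∂pointedLebesgue := by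
        refine integral_congr_ae (.of_forall fun t => ?_)
        simp only [integral_mul_const]
        exact congrArg (· * z t) (integral_indicator (hmeas.preimage measurable_prodMk_right))

theorem coeFn_adjoint_energyEmbedding [NullSingletonClass μ]
    (hμ : ∀ᵐ x ∂μ, x ∈ Set.Icc (0 : ℝ) 1) (f : Lp ℝ 2 μ) :
    (energyEmbedding μ).adjoint f =ᵐ[pointedLebesgue] fun t => ∫ s in t..1, f s ∂μ := by
  have hf : Integrable f μ := (Lp.memLp f).integrable one_le_two
  suffices h : (energyEmbedding μ).adjoint f = (memLp_tailIntegral hf).toLp by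
    rw [h]
    exact (memLp_tailIntegral hf).coeFn_toLp
  refine ext_inner_right ℝ fun z => ?_
  rw [ContinuousLinearMap.adjoint_inner_left, inner_energyEmbedding_right,
    integral_mul_inner_evalKernel hf, L2.inner_def]
  have hIcc : ∀ᵐ t ∂pointedLebesgue, t ∈ Set.Icc (0 : ℝ) 1 := ae_pointedLebesgue_iff.2
    ⟨⟨le_rfl, zero_le_one⟩, (ae_restrict_mem measurableSet_Ioc).mono fun _ ht =>
      Set.Ioc_subset_Icc_self ht⟩
  refine integral_congr_ae ?_
  filter_upwards [hIcc, (memLp_tailIntegral hf).coeFn_toLp] with t ht htail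
  rw [htail, setIntegral_le_max_eq_intervalIntegral hμ f ht, RCLike.inner_apply, conj_trivial,
    mul_comm]

end WeightedEnergy

section RobinProblem

open scoped RealInnerProductSpace

open InnerProductSpace (rankOne)

/-- The operator of the form `(y, z) ↦ ∫ y' z' + γ₀ y(0) z(0) + γ₁ y(1) z(1)` on the energy
space; the rank-one term subtracted from the identity takes `y(0) z(0)` out of the inner product. -/
noncomputable def robinOperator (γ₀ γ₁ : ℝ) : EnergySpace →L[ℝ] EnergySpace :=
  (1 - rankOne ℝ (evalKernel 0) (evalKernel 0)) + γ₀ • rankOne ℝ (evalKernel 0) (evalKernel 0) +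
    γ₁ • rankOne ℝ (evalKernel 1) (evalKernel 1)

theorem robinOperator_apply (γ₀ γ₁ : ℝ) (y : EnergySpace) :
    robinOperator γ₀ γ₁ y = y + ((γ₀ - 1) * ⟪evalKernel 0, y⟫) • evalKernel 0 +
      (γ₁ * ⟪evalKernel 1, y⟫) • evalKernel 1 := by
  simp only [robinOperator, add_apply, sub_apply, one_apply_eq_self, smul_apply,
    InnerProductSpace.rankOne_apply]
  module

theorem inner_robinOperator_self (γ₀ γ₁ : ℝ) (y : EnergySpace) :
    ⟪robinOperator γ₀ γ₁ y, y⟫ = ‖y‖ ^ 2 - ⟪evalKernel 0, y⟫ ^ 2 +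
      γ₀ * ⟪evalKernel 0, y⟫ ^ 2 + γ₁ * ⟪evalKernel 1, y⟫ ^ 2 := by
  rw [robinOperator_apply, inner_add_left, inner_add_left, real_inner_smul_left,
    real_inner_smul_left, real_inner_self_eq_norm_sq]
  ring

theorem isPositive_robinOperator {γ₀ γ₁ : ℝ} (hγ₀ : 0 ≤ γ₀) (hγ₁ : 0 ≤ γ₁) :
    (robinOperator γ₀ γ₁).IsPositive := by
  have hnorm : ‖evalKernel 0‖ = 1 := by
    rw [norm_eq_sqrt_real_inner, inner_evalKernel_evalKernel ⟨le_rfl, zero_le_one⟩ le_rfl, add_zero,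
      Real.sqrt_one]
  exact ((ContinuousLinearMap.IsPositive.of_isStarProjection
    (InnerProductSpace.isStarProjection_rankOne_self hnorm).one_sub).add
    ((InnerProductSpace.isPositive_rankOne_self _).smul_of_nonneg hγ₀)).add
    ((InnerProductSpace.isPositive_rankOne_self _).smul_of_nonneg hγ₁)

theorem coeFn_robinOperator (γ₀ γ₁ : ℝ) (y : EnergySpace) :
    ∀ᵐ t ∂pointedLebesgue, robinOperator γ₀ γ₁ y t =
      y t + (γ₀ - 1) * ⟪evalKernel 0, y⟫ * (Set.Iic (0 : ℝ)).indicator 1 t +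
        γ₁ * ⟪evalKernel 1, y⟫ * (Set.Iic (1 : ℝ)).indicator 1 t := by
  rw [robinOperator_apply]
  filter_upwards [Lp.coeFn_add (y + ((γ₀ - 1) * ⟪evalKernel 0, y⟫) • evalKernel 0)
      ((γ₁ * ⟪evalKernel 1, y⟫) • evalKernel 1),
    Lp.coeFn_add y (((γ₀ - 1) * ⟪evalKernel 0, y⟫) • evalKernel 0),
    Lp.coeFn_smul ((γ₀ - 1) * ⟪evalKernel 0, y⟫) (evalKernel 0),
    Lp.coeFn_smul (γ₁ * ⟪evalKernel 1, y⟫) (evalKernel 1),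
    coeFn_evalKernel 0, coeFn_evalKernel 1] with t hadd hadd₀ hsmul₀ hsmul₁ hk₀ hk₁
  rw [hadd, Pi.add_apply, hadd₀, Pi.add_apply, hsmul₀, hsmul₁, Pi.smul_apply, Pi.smul_apply,
    hk₀, hk₁, max_self, max_eq_left zero_le_one, smul_eq_mul, smul_eq_mul]

theorem robinOperator_apply_zero (γ₀ γ₁ : ℝ) (y : EnergySpace) :
    robinOperator γ₀ γ₁ y 0 = γ₀ * ⟪evalKernel 0, y⟫ + γ₁ * ⟪evalKernel 1, y⟫ := by
  rw [(ae_pointedLebesgue_iff.1 (coeFn_robinOperator γ₀ γ₁ y)).1, ← inner_evalKernel_zero,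
    Set.indicator_of_mem (Set.mem_Iic.2 le_rfl), Set.indicator_of_mem (Set.mem_Iic.2 zero_le_one),
    Pi.one_apply]
  ring

theorem ae_robinOperator_apply (γ₀ γ₁ : ℝ) (y : EnergySpace) :
    ∀ᵐ t ∂volume.restrict (Set.Ioc 0 1),
      robinOperator γ₀ γ₁ y t = y t + γ₁ * ⟪evalKernel 1, y⟫ := by
  filter_upwards [(ae_pointedLebesgue_iff.1 (coeFn_robinOperator γ₀ γ₁ y)).2,
    ae_restrict_mem measurableSet_Ioc] with t hrobin ht
  rw [hrobin, Set.indicator_of_notMem (Set.notMem_Iic.2 ht.1),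
    Set.indicator_of_mem (Set.mem_Iic.2 ht.2), mul_zero, add_zero, Pi.one_apply, mul_one]

variable {μ : Measure ℝ} [IsFiniteMeasure μ] {γ₀ γ₁ t : ℝ}

theorem norm_sq_le_inner_robinOperator_add (hμ : ∀ᵐ x ∂μ, x ∈ Set.Icc (0 : ℝ) 1)
    (hγ₀ : 0 ≤ γ₀) (hγ₁ : 0 ≤ γ₁) (y : EnergySpace) :
    μ.real Set.univ / (3 * μ.real Set.univ + 2) * ‖y‖ ^ 2 ≤
      ⟪robinOperator γ₀ γ₁ y, y⟫ + ‖energyEmbedding μ y‖ ^ 2 := by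
  set M := μ.real Set.univ
  have hM : 0 ≤ M := measureReal_nonneg
  have hderiv : 0 ≤ ‖y‖ ^ 2 - ⟪evalKernel 0, y⟫ ^ 2 :=
    (sq_nonneg _).trans (sq_inner_evalKernel_sub_le y ⟨le_rfl, zero_le_one⟩)
  have hform : ‖y‖ ^ 2 - ⟪evalKernel 0, y⟫ ^ 2 ≤ ⟪robinOperator γ₀ γ₁ y, y⟫ := by
    rw [inner_robinOperator_self]
    linarith [mul_nonneg hγ₀ (sq_nonneg ⟪evalKernel 0, y⟫),
      mul_nonneg hγ₁ (sq_nonneg ⟪evalKernel 1, y⟫)]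
  have hweight : M * ⟪evalKernel 0, y⟫ ^ 2 ≤ 2 * ‖energyEmbedding μ y‖ ^ 2 +
      2 * (M * (‖y‖ ^ 2 - ⟪evalKernel 0, y⟫ ^ 2)) :=
    measureReal_univ_mul_sq_inner_evalKernel_zero_le hμ y
  rw [div_mul_eq_mul_div, div_le_iff₀ (by positivity)]
  nlinarith [mul_nonneg hM (sq_nonneg ‖energyEmbedding μ y‖), mul_nonneg hM (sub_nonneg.2 hform)]

theorem mem_pencilEigenspace_robinOperator_iff [NullSingletonClass μ]
    (hμ : ∀ᵐ x ∂μ, x ∈ Set.Icc (0 : ℝ) 1) {y : EnergySpace} :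
    y ∈ pencilEigenspace (robinOperator γ₀ γ₁) (energyEmbedding μ) t ↔
      γ₀ * ⟪evalKernel 0, y⟫ + γ₁ * ⟪evalKernel 1, y⟫ =
          t * ∫ s in (0 : ℝ)..1, ⟪evalKernel s, y⟫ ∂μ ∧
        ∀ᵐ x ∂volume.restrict (Set.Ioc 0 1),
          y x = γ₀ * ⟪evalKernel 0, y⟫ - t * ∫ s in (0 : ℝ)..x, ⟪evalKernel s, y⟫ ∂μ := by
  have hint (a b : ℝ) : IntervalIntegrable (fun s => ⟪evalKernel s, y⟫) μ a b :=
    (integrable_inner_evalKernel μ y).intervalIntegrable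
  have hright : ∀ᵐ x ∂pointedLebesgue,
      (t • (energyEmbedding μ).adjoint (energyEmbedding μ y)) x =
        t * ∫ s in x..1, ⟪evalKernel s, y⟫ ∂μ := by
    filter_upwards [Lp.coeFn_smul t ((energyEmbedding μ).adjoint (energyEmbedding μ y)),
      coeFn_adjoint_energyEmbedding hμ (energyEmbedding μ y)] with x hsmul hadj
    rw [hsmul, Pi.smul_apply, hadj, smul_eq_mul, intervalIntegral.integral_congr_ae
      ((coeFn_energyEmbedding μ y).mono fun _ hs _ => hs)]
  obtain ⟨hright₀, hright₁⟩ := ae_pointedLebesgue_iff.1 hright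
  rw [mem_pencilEigenspace_iff_eq_smul_adjoint, Lp.ext_iff, Filter.EventuallyEq,
    ae_pointedLebesgue_iff, robinOperator_apply_zero, hright₀]
  refine and_congr_right fun hboundary => Filter.eventually_congr ?_
  filter_upwards [hright₁, ae_robinOperator_apply γ₀ γ₁ y] with x hx hrobin
  rw [hx, hrobin, ← intervalIntegral.integral_interval_sub_left (hint 0 1) (hint 0 x), mul_sub,
    ← hboundary]
  constructor <;> intro h <;> linarith

theorem abs_mul_setIntegral_Icc_le {y G : ℝ → ℝ} {x : ℝ} (hG : MonotoneOn G (Set.Icc 0 x))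
    (hyG : ∀ s ∈ Set.Icc 0 x, |y s| ≤ G s) (hx : 0 ≤ x) :
    |t * ∫ s in Set.Icc 0 x, y s ∂μ| ≤ |t| * μ.real Set.univ * G x := by
  have hxx : x ∈ Set.Icc 0 x := ⟨hx, le_rfl⟩
  have hGx : 0 ≤ G x := (abs_nonneg _).trans (hyG x hxx)
  rw [abs_mul, mul_assoc, mul_comm (μ.real _)]
  gcongr
  calc |∫ s in Set.Icc 0 x, y s ∂μ| ≤ G x * μ.real (Set.Icc 0 x) :=
        norm_setIntegral_le_of_norm_le_const (f := y) (measure_lt_top _ _) fun s hs =>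
          (Real.norm_eq_abs (y s)).trans_le ((hyG s hs).trans (hG hs hxx hs.2))
    _ ≤ G x * μ.real Set.univ := by gcongr; exacts [measure_ne_top _ _, Set.subset_univ _]

theorem eq_zero_of_integral_equations {y g : ℝ → ℝ} (hg : Continuous g)
    (hy : ∀ x ∈ Set.Icc (0 : ℝ) 1, y x = ∫ s in (0 : ℝ)..x, g s)
    (hgy : ∀ x ∈ Set.Icc (0 : ℝ) 1, g x = -(t * ∫ s in Set.Icc 0 x, y s ∂μ)) :
    ∀ x ∈ Set.Icc (0 : ℝ) 1, g x = 0 := by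
  set G : ℝ → ℝ := fun x => ∫ s in (0 : ℝ)..x, |g s|
  have hderiv (x : ℝ) : HasDerivAt G |g x| x := hg.abs.integral_hasStrictDerivAt 0 x |>.hasDerivAt
  have hmono : Monotone G := monotone_of_deriv_nonneg (fun x => (hderiv x).differentiableAt)
    fun x => (hderiv x).deriv ▸ abs_nonneg _
  have hG₀ : G 0 = 0 := intervalIntegral.integral_same
  have hyG (x : ℝ) (hx : x ∈ Set.Icc (0 : ℝ) 1) : |y x| ≤ G x :=
    hy x hx ▸ intervalIntegral.abs_integral_le_integral_abs hx.1
  have hgG (x : ℝ) (hx : x ∈ Set.Icc (0 : ℝ) 1) : |g x| ≤ |t| * μ.real Set.univ * G x := by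
    rw [hgy x hx, abs_neg]
    exact abs_mul_setIntegral_Icc_le (hmono.monotoneOn _)
      (fun s hs => hyG s ⟨hs.1, hs.2.trans hx.2⟩) hx.1
  have hG : ∀ x ∈ Set.Icc (0 : ℝ) 1, G x = 0 := by
    refine eq_zero_of_abs_deriv_le_mul_abs_self_of_eq_zero_right (K := |t| * μ.real Set.univ)
      (fun x _ => (hderiv x).continuousAt.continuousWithinAt)
      (fun x _ => (hderiv x).hasDerivWithinAt) hG₀ fun x hx => ?_
    have hGx : 0 ≤ G x := hG₀.symm.trans_le (hmono hx.1)
    rw [Real.norm_eq_abs, Real.norm_eq_abs, abs_abs, abs_of_nonneg hGx]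
    exact hgG x ⟨hx.1, hx.2.le⟩
  intro x hx
  have h := hgG x hx
  rw [hG x hx, mul_zero] at h
  exact abs_nonpos_iff.1 h

theorem setIntegral_Icc_eq_intervalIntegral {μ : Measure ℝ} [NullSingletonClass μ] (f : ℝ → ℝ)
    {a b : ℝ} (hab : a ≤ b) : ∫ s in Set.Icc a b, f s ∂μ = ∫ s in a..b, f s ∂μ := by
  rw [intervalIntegral.integral_of_le hab, integral_Icc_eq_integral_Ioc]

variable [NullSingletonClass μ]

theorem eq_zero_of_inner_evalKernel_zero_eq_zero (hμ : ∀ᵐ x ∂μ, x ∈ Set.Icc (0 : ℝ) 1)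
    {y : EnergySpace} (hy : y ∈ pencilEigenspace (robinOperator γ₀ γ₁) (energyEmbedding μ) t)
    (hy₀ : ⟪evalKernel 0, y⟫ = 0) : y = 0 := by
  set g : ℝ → ℝ := fun x => -(t * ∫ s in (0 : ℝ)..x, ⟪evalKernel s, y⟫ ∂μ)
  have hg : Continuous g := ((intervalIntegral.continuous_primitive
    (fun _ _ => (integrable_inner_evalKernel μ y).intervalIntegrable) 0).const_mul t).neg
  have hyg : ∀ᵐ x ∂volume.restrict (Set.Ioc 0 1), y x = g x := by
    filter_upwards [((mem_pencilEigenspace_robinOperator_iff hμ).1 hy).2] with x hx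
    rw [hx, hy₀, mul_zero, zero_sub]
  have hgzero : ∀ x ∈ Set.Icc (0 : ℝ) 1, g x = 0 :=
    eq_zero_of_integral_equations (y := fun x => ⟪evalKernel x, y⟫) (μ := μ) (t := t) hg
      (fun x hx => by rw [inner_evalKernel_of_ae_eq hyg hx, hy₀, zero_add])
      fun x hx => by rw [setIntegral_Icc_eq_intervalIntegral _ hx.1]
  refine Lp.eq_zero_iff_ae_eq_zero.2 (ae_pointedLebesgue_iff.2
    ⟨(inner_evalKernel_zero y).symm.trans hy₀, ?_⟩)
  filter_upwards [hyg, ae_restrict_mem measurableSet_Ioc] with x hx hxI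
  exact hx.trans (hgzero x (Set.Ioc_subset_Icc_self hxI))

theorem rank_pencilEigenspace_robinOperator_le_one (hμ : ∀ᵐ x ∂μ, x ∈ Set.Icc (0 : ℝ) 1) :
    Module.rank ℝ (pencilEigenspace (robinOperator γ₀ γ₁) (energyEmbedding μ) t) ≤ 1 := by
  rw [← Module.rank_self ℝ]
  refine LinearMap.rank_le_of_injective
    ((innerSL ℝ (evalKernel 0) : EnergySpace →ₗ[ℝ] ℝ) ∘ₗ Submodule.subtype _) ?_
  refine (injective_iff_map_eq_zero _).2 fun y hy => Subtype.ext ?_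
  exact eq_zero_of_inner_evalKernel_zero_eq_zero hμ y.2 hy

theorem pencilEigenspace_robinOperator_ne_bot_of_isEigen (hμ : ∀ᵐ x ∂μ, x ∈ Set.Icc (0 : ℝ) 1)
    (h : IsEigen μ γ₀ γ₁ t) :
    pencilEigenspace (robinOperator γ₀ γ₁) (energyEmbedding μ) t ≠ ⊥ := by
  obtain ⟨y, g, -, hg, ⟨x₀, hx₀, hyx₀⟩, hyg, hgy, hzero, hone⟩ := h
  obtain ⟨u, hu₀, hug⟩ := exists_energySpace_ae_eq (y 0) hg
  have huy (x : ℝ) (hx : x ∈ Set.Icc (0 : ℝ) 1) : ⟪evalKernel x, u⟫ = y x := by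
    rw [inner_evalKernel_of_ae_eq hug hx, hu₀, hyg x hx]
  have hintegral (x : ℝ) (hx : x ∈ Set.Icc (0 : ℝ) 1) :
      t * ∫ s in (0 : ℝ)..x, ⟪evalKernel s, u⟫ ∂μ = g 0 - g x := by
    rw [hgy x hx, ← setIntegral_Icc_eq_intervalIntegral _ hx.1, sub_sub_cancel]
    exact congrArg (t * ·) (setIntegral_congr_fun measurableSet_Icc fun s hs =>
      huy s ⟨hs.1, hs.2.trans hx.2⟩)
  refine (Submodule.ne_bot_iff _).2
    ⟨u, (mem_pencilEigenspace_robinOperator_iff hμ).2 ⟨?_, ?_⟩, ?_⟩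
  · rw [hintegral 1 ⟨zero_le_one, le_rfl⟩, hu₀, huy 1 ⟨zero_le_one, le_rfl⟩]
    linarith
  · filter_upwards [hug, ae_restrict_mem measurableSet_Ioc] with x hx hxI
    rw [hx, hu₀, hintegral x (Set.Ioc_subset_Icc_self hxI)]
    linarith
  · rintro rfl
    exact hyx₀ (by rw [← huy x₀ hx₀, inner_zero_right])

theorem isEigen_of_mem_pencilEigenspace (hμ : ∀ᵐ x ∂μ, x ∈ Set.Icc (0 : ℝ) 1) {y : EnergySpace}
    (hy : y ∈ pencilEigenspace (robinOperator γ₀ γ₁) (energyEmbedding μ) t) (hy₀ : y ≠ 0) :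
    IsEigen μ γ₀ γ₁ t := by
  obtain ⟨hboundary, hyg⟩ := (mem_pencilEigenspace_robinOperator_iff hμ).1 hy
  have hcont : Continuous fun x => ∫ s in (0 : ℝ)..x, ⟪evalKernel s, y⟫ ∂μ :=
    intervalIntegral.continuous_primitive
      (fun _ _ => (integrable_inner_evalKernel μ y).intervalIntegrable) 0
  refine ⟨fun x => ⟪evalKernel x, y⟫,
    fun x => γ₀ * ⟪evalKernel 0, y⟫ - t * ∫ s in (0 : ℝ)..x, ⟪evalKernel s, y⟫ ∂μ,
    (continuous_inner_evalKernel y).continuousOn, (by fun_prop),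
    ⟨0, ⟨le_rfl, zero_le_one⟩, fun h => hy₀ (eq_zero_of_inner_evalKernel_zero_eq_zero hμ hy h)⟩,
    fun x hx => inner_evalKernel_of_ae_eq hyg hx, fun x hx => ?_, ?_, ?_⟩
  · beta_reduce
    rw [setIntegral_Icc_eq_intervalIntegral _ hx.1, intervalIntegral.integral_same, mul_zero,
      sub_zero]
  · beta_reduce
    rw [intervalIntegral.integral_same, mul_zero, sub_zero, sub_self]
  · beta_reduce
    rw [← hboundary]
    ring

theorem pencilEigenspace_robinOperator_ne_bot_iff (hμ : ∀ᵐ x ∂μ, x ∈ Set.Icc (0 : ℝ) 1) :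
    pencilEigenspace (robinOperator γ₀ γ₁) (energyEmbedding μ) t ≠ ⊥ ↔ IsEigen μ γ₀ γ₁ t := by
  refine ⟨fun h => ?_, pencilEigenspace_robinOperator_ne_bot_of_isEigen hμ⟩
  obtain ⟨y, hy, hy₀⟩ := (Submodule.ne_bot_iff _).1 h
  exact isEigen_of_mem_pencilEigenspace hμ hy hy₀

theorem exists_isPencilEigenbasis_robinOperator [NeZero μ]
    (hμ : ∀ᵐ x ∂μ, x ∈ Set.Icc (0 : ℝ) 1) (hγ₀ : 0 ≤ γ₀) (hγ₁ : 0 ≤ γ₁) {l : ℕ → ℝ}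
    (hl : Function.Injective l) (hrange : Set.range l = {t | IsEigen μ γ₀ γ₁ t}) :
    ∃ v, IsPencilEigenbasis (robinOperator γ₀ γ₁) (energyEmbedding μ) l v := by
  have hM : 0 < μ.real Set.univ := measureReal_univ_pos
  refine exists_isPencilEigenbasis (isPositive_robinOperator hγ₀ hγ₁).isSymmetric (by positivity)
    (norm_sq_le_inner_robinOperator_add hμ hγ₀ hγ₁) (isCompactOperator_energyEmbedding μ)
    (denseRange_energyEmbedding hμ) (fun _ => rank_pencilEigenspace_robinOperator_le_one hμ) hl ?_
  simp only [hrange, pencilEigenspace_robinOperator_ne_bot_iff hμ]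

end RobinProblem

section CumulativeDistribution

variable {P : ℝ → ℝ} {μ : Measure ℝ}

theorem isProbabilityMeasure_of_measure_Icc_eq (hP₁ : P 1 = 1)
    (hμ : ∀ x ∈ Set.Icc (0 : ℝ) 1, μ (Set.Icc 0 x) = ENNReal.ofReal (P x))
    (hμc : μ (Set.Icc (0 : ℝ) 1)ᶜ = 0) : IsProbabilityMeasure μ := by
  constructor
  rw [← measure_add_measure_compl (measurableSet_Icc : MeasurableSet (Set.Icc (0 : ℝ) 1)), hμc,
    hμ 1 ⟨zero_le_one, le_rfl⟩, hP₁, ENNReal.ofReal_one, add_zero]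

theorem measureReal_singleton_le_sub [IsFiniteMeasure μ] (hP₀ : P 0 = 0)
    (hPm : MonotoneOn P (Set.Icc 0 1))
    (hμ : ∀ x ∈ Set.Icc (0 : ℝ) 1, μ (Set.Icc 0 x) = ENNReal.ofReal (P x)) {x z : ℝ}
    (hz : 0 ≤ z) (hzx : z < x) (hx : x ≤ 1) : μ.real {x} ≤ P x - P z := by
  have hreal (s : ℝ) (hs : s ∈ Set.Icc (0 : ℝ) 1) : μ.real (Set.Icc 0 s) = P s := by
    rw [measureReal_def, hμ s hs, ENNReal.toReal_ofReal]
    exact hP₀ ▸ hPm ⟨le_rfl, zero_le_one⟩ hs hs.1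
  have hdisj : Disjoint (Set.Icc 0 z) {x} :=
    Set.disjoint_singleton_right.2 fun h => hzx.not_ge h.2
  have hsub : Set.Icc 0 z ∪ {x} ⊆ Set.Icc 0 x := Set.union_subset
    (Set.Icc_subset_Icc_right hzx.le) (Set.singleton_subset_iff.2 ⟨hz.trans hzx.le, le_rfl⟩)
  have hle : μ.real (Set.Icc 0 z) + μ.real {x} ≤ μ.real (Set.Icc 0 x) := by
    rw [← measureReal_union hdisj (measurableSet_singleton x)]
    exact measureReal_mono hsub
  rw [hreal z ⟨hz, hzx.le.trans hx⟩, hreal x ⟨hz.trans hzx.le, hx⟩] at hle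
  linarith

theorem nullSingletonClass_of_measure_Icc_eq [IsFiniteMeasure μ]
    (hPc : ContinuousOn P (Set.Icc 0 1)) (hP₀ : P 0 = 0) (hPm : MonotoneOn P (Set.Icc 0 1))
    (hμ : ∀ x ∈ Set.Icc (0 : ℝ) 1, μ (Set.Icc 0 x) = ENNReal.ofReal (P x))
    (hμc : μ (Set.Icc (0 : ℝ) 1)ᶜ = 0) : NullSingletonClass μ := by
  refine ⟨fun x => ?_⟩
  by_cases hx : x ∈ Set.Icc (0 : ℝ) 1
  · rcases hx.1.eq_or_lt with rfl | hx₀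
    · simpa [hP₀] using hμ 0 hx
    · have hlim : Filter.Tendsto (fun z => P x - P z) (nhdsWithin x (Set.Ioo 0 x))
          (nhds (P x - P x)) := tendsto_const_nhds.sub
        ((hPc x hx).mono_left (nhdsWithin_mono x fun z hz => ⟨hz.1.le, hz.2.le.trans hx.2⟩))
      have : (nhdsWithin x (Set.Ioo 0 x)).NeBot := right_nhdsWithin_Ioo_neBot hx₀
      have hle : μ.real {x} ≤ P x - P x :=
        ge_of_tendsto hlim (Filter.eventually_of_mem self_mem_nhdsWithin fun z hz =>
          measureReal_singleton_le_sub hP₀ hPm hμ hz.1.le hz.2 hx.2)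
      rw [sub_self] at hle
      exact (measureReal_eq_zero_iff).1 (hle.antisymm measureReal_nonneg)
  · exact measure_mono_null (Set.singleton_subset_iff.2 hx) hμc

end CumulativeDistribution

open scoped RealInnerProductSpace in
theorem log_eigenvalue_series_bounded_general {μ : Measure ℝ} [IsFiniteMeasure μ]
    [NullSingletonClass μ] [NeZero μ] (hμ : ∀ᵐ x ∂μ, x ∈ Set.Icc (0 : ℝ) 1) {γ₀ γ₁ : ℝ}
    (hγ₀ : 0 ≤ γ₀) (hγ₁ : 0 ≤ γ₁) {lam mu : ℕ → ℝ} (hlam : StrictMono lam)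
    (hlamrange : Set.range lam = {l | IsEigen μ 0 0 l}) (hmu : StrictMono mu)
    (hmurange : Set.range mu = {l | IsEigen μ γ₀ γ₁ l}) :
    ∃ C : ℝ, ∀ N : ℕ,
      ∑ n ∈ Finset.Icc 1 N, |Real.log (mu n) - Real.log (lam n)| ≤ C := by
  obtain ⟨u, hu⟩ :=
    exists_isPencilEigenbasis_robinOperator hμ le_rfl le_rfl hlam.injective hlamrange
  obtain ⟨v, hv⟩ :=
    exists_isPencilEigenbasis_robinOperator hμ hγ₀ hγ₁ hmu.injective hmurange
  have hA := isPositive_robinOperator (le_refl 0) (le_refl 0)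
  have hA' := isPositive_robinOperator hγ₀ hγ₁
  have hM : 0 < μ.real Set.univ := measureReal_univ_pos
  have hperturb (y : EnergySpace) : ⟪robinOperator γ₀ γ₁ y, y⟫ = ⟪robinOperator 0 0 y, y⟫ +
      ∑ k, ⟪![√γ₀ • evalKernel 0, √γ₁ • evalKernel 1] k, y⟫ ^ 2 := by
    simp only [inner_robinOperator_self, Fin.sum_univ_two, Matrix.cons_val_zero,
      Matrix.cons_val_one, real_inner_smul_left, mul_pow, Real.sq_sqrt, hγ₀, hγ₁]
    ring
  have hle (n : ℕ) : lam n ≤ mu n := hu.eigenvalue_le_of_inner_le hv hA hlam.monotone hmu.monotone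
    (fun y => hperturb y ▸ le_add_of_nonneg_right (Finset.sum_nonneg fun _ _ => sq_nonneg _)) n
  exact ⟨_, sum_Icc_abs_log_sub_log_le hlam (hu.eigenvalue_nonneg hA 0) hle
    (hu.sum_range_sub_div_le hv hA hA' hlam.monotone hmu.monotone (by positivity)
      (norm_sq_le_inner_robinOperator_add hμ le_rfl le_rfl) _ hperturb)⟩

theorem log_eigenvalue_series_bounded (κ : ℕ) (a b : ℝ) (hκ : 2 ≤ κ)
    (ha : 0 < a) (ha' : a < 1 / κ) (hb : b = (1 - κ * a) / (κ - 1))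
    (P : ℝ → ℝ) (hP : CantorType κ a b P) (hPmono : MonotoneOn P (Set.Icc 0 1))
    (μ : Measure ℝ)
    (hμ : ∀ x ∈ Set.Icc (0 : ℝ) 1, μ (Set.Icc 0 x) = ENNReal.ofReal (P x))
    (hμc : μ (Set.Icc (0 : ℝ) 1)ᶜ = 0)
    (γ₀ γ₁ : ℝ) (hγ₀ : 0 ≤ γ₀) (hγ₁ : 0 ≤ γ₁)
    (lam : ℕ → ℝ) (hlam : StrictMono lam)
    (hlamrange : Set.range lam = {l : ℝ | IsEigen μ 0 0 l})
    (mu : ℕ → ℝ) (hmu : StrictMono mu)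
    (hmurange : Set.range mu = {l : ℝ | IsEigen μ γ₀ γ₁ l}) :
    ∃ C : ℝ, ∀ N : ℕ, 1 ≤ N →
      ∑ n ∈ Finset.Icc 1 N, |Real.log (mu n) - Real.log (lam n)| ≤ C := by
  obtain ⟨hPc, hP₀, hP₁, -⟩ := hP
  have := isProbabilityMeasure_of_measure_Icc_eq hP₁ hμ hμc
  have := nullSingletonClass_of_measure_Icc_eq hPc hP₀ hPmono hμ hμc
  exact (log_eigenvalue_series_bounded_general hμc hγ₀ hγ₁ hlam hlamrange hmu hmurange).imp
    fun _ hC N _ => hC N
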